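/- Let b, c : ℝ → ℝ with b(x) > 0, and suppose there exists an integer h ≥ 1 such that: (1) c is h-times differentiable on some interval [x₀,∞), c^(h)(x) → 0 as x → ∞ and c^(h) is monotonic for all sufficiently large x; (2) x·|c^(h)(x)| → ∞ as x → ∞; and (3) x ↦ log b(x) is h-times differentiable on [x₀,∞) with (d^h/dx^h)(log b(x)) / c^(h)(x) → 0 as x → ∞. Then for every nonzero real number λ, the sequence n ↦ λ·(log b(n) + c(n)) is uniformly distributed modulo 1. In particular, for every integer k ≥ 2 the sequence n ↦ (log b(n) + c(n))/log k is uniformly distributed modulo 1. -/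

import Mathlib

/-!
By Weyl's criterion it suffices that `exp (2πi m l (log b n + c n))` has mean zero for each integer
`m ≠ 0`. Absorbing the constant `2π m l`, the claim is that `exp (i (C n + G n))` has mean zero
whenever the leading derivative `φ` of `C` tends monotonically to `0` with `x |φ x| → ∞`, and the
corresponding derivative `γ` of `G` is `o(φ)` (`IsGoodPair φ γ`).

The proof is by induction on the order of the derivative. By the mean value theorems of Lagrange
and Cauchy, this condition passes from derivatives to finite differences (`IsGoodPair.diff`), so
van der Corput's difference theorem (`meanZero_of_correlations`) lowers the order by one.

In order one, the increments of the phase are `d n + e n` with `d` monotone, `d → 0`,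
`n |d n| → ∞` and `e = o(d)`. With `z n` the exponential, `z (n + 1) - z n = z n (i d n + o(d n))`,
that is, `z n = (z (n + 1) - z n) / (i d n) + o(1)`. Partial summation bounds the sum of the main
term over `n < N` by the size and the variation of `1 / d`, which is `o(N)` because `1 / d` is
eventually monotone (`meanZero_exp_of_increments`). Only `d` has to be monotone, not `d + e`.

Weyl's criterion itself (`unifDistMod1_of_meanZero`) comes from the density of trigonometric
polynomials in the continuous functions on the circle, together with the portmanteau theorem
applied to the empirical measures and to arcs, whose boundaries are null.
-/

open Filter Topology

/-- `|x|` begins with the base-`k` digit string of `d`: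
there is an integer `m ≥ 0` with `d·k^m ≤ |x| < (d+1)·k^m`. -/
def BeginsWith (k d : ℕ) (x : ℝ) : Prop :=
  ∃ m : ℕ, (d : ℝ) * (k : ℝ) ^ m ≤ |x| ∧ |x| < ((d : ℝ) + 1) * (k : ℝ) ^ m

open scoped Classical in
/-- The set `S ⊆ ℕ` has natural density `r`. -/
def HasNatDensity (S : Set ℕ) (r : ℝ) : Prop :=
  Tendsto (fun N : ℕ => (((Finset.range N).filter (fun n => n ∈ S)).card : ℝ) / N)
    atTop (𝓝 r)

/-- The sequence `a` is Benford. -/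
def IsBenford (a : ℕ → ℝ) : Prop :=
  ∀ k : ℕ, 2 ≤ k → ∀ d : ℕ, 0 < d →
    HasNatDensity {n | BeginsWith k d (a n)} (Real.logb k (d + 1) - Real.logb k d)

open scoped Classical in
/-- The real sequence `x` is uniformly distributed modulo 1. -/
def UnifDistMod1 (x : ℕ → ℝ) : Prop :=
  ∀ a b : ℝ, 0 ≤ a → a < b → b ≤ 1 →
    Tendsto (fun N : ℕ =>
        (((Finset.Icc 1 N).filter (fun n => Int.fract (x n) ∈ Set.Ico a b)).card : ℝ) / N)
      atTop (𝓝 (b - a))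

/-! ### Cesàro means -/

/-- The Cesàro means `(w 0 + ⋯ + w (N - 1)) / N` tend to `0`. -/
def MeanZero (w : ℕ → ℂ) : Prop :=
  Tendsto (fun N : ℕ => (∑ n ∈ Finset.range N, w n) / (N : ℂ)) atTop (𝓝 0)

lemma MeanZero.add {v w : ℕ → ℂ} (hv : MeanZero v) (hw : MeanZero w) :
    MeanZero (fun n => v n + w n) := by
  have := Tendsto.add hv hw
  simp only [add_zero] at this
  refine this.congr fun N => ?_
  rw [Finset.sum_add_distrib, add_div]

lemma MeanZero.const_mul {w : ℕ → ℂ} (a : ℂ) (hw : MeanZero w) :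
    MeanZero (fun n => a * w n) := by
  have := Tendsto.const_mul a hw
  simp only [mul_zero] at this
  refine this.congr fun N => ?_
  rw [← Finset.mul_sum, mul_div_assoc]

lemma MeanZero.sub {v w : ℕ → ℂ} (hv : MeanZero v) (hw : MeanZero w) :
    MeanZero (fun n => v n - w n) := by
  have := hv.add (hw.const_mul (-1))
  simpa [sub_eq_add_neg] using this

lemma MeanZero.sum {ι : Type*} (s : Finset ι) {w : ι → ℕ → ℂ} (hw : ∀ i ∈ s, MeanZero (w i)) :
    MeanZero (fun n => ∑ i ∈ s, w i n) := by
  have := tendsto_finsetSum s hw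
  simp only [Finset.sum_const_zero] at this
  refine this.congr fun N => ?_
  rw [Finset.sum_comm, Finset.sum_div]

lemma meanZero_of_tendsto {w : ℕ → ℂ} (hw : Tendsto w atTop (𝓝 0)) : MeanZero w := by
  refine hw.cesaro_smul.congr fun N => ?_
  rw [div_eq_inv_mul, ← Complex.coe_smul]
  simp

lemma meanZero_of_norm_le {w : ℕ → ℂ} {v : ℕ → ℝ} (h : ∀ n, ‖w n‖ ≤ v n)
    (hv : MeanZero (fun n => (v n : ℂ))) : MeanZero w := by
  unfold MeanZero at hv ⊢
  rw [tendsto_zero_iff_norm_tendsto_zero] at hv ⊢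
  refine squeeze_zero (fun _ => norm_nonneg _) (fun N => ?_) hv
  rw [norm_div, norm_div]
  gcongr
  rw [← Complex.ofReal_sum, Complex.norm_real]
  exact (norm_sum_le _ _).trans ((Finset.sum_le_sum fun n _ => h n).trans (le_abs_self _))

open ComplexConjugate in
lemma MeanZero.conj {w : ℕ → ℂ} (hw : MeanZero w) : MeanZero (fun n => conj (w n)) := by
  have := (Complex.continuous_conj.tendsto 0).comp hw
  rw [map_zero] at this
  refine this.congr fun N => ?_
  simp

/-- The means of a telescoping sequence vanish as soon as `w N = o(N)`. -/
lemma meanZero_telescope {w : ℕ → ℂ} (hw : Tendsto (fun N : ℕ => w N / (N : ℂ)) atTop (𝓝 0)) :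
    MeanZero (fun n => w (n + 1) - w n) := by
  have h0 : Tendsto (fun N : ℕ => w 0 / (N : ℂ)) atTop (𝓝 0) :=
    tendsto_const_div_atTop_nhds_zero_nat (w 0)
  have := hw.sub h0
  simp only [sub_zero] at this
  refine this.congr fun N => ?_
  rw [Finset.sum_range_sub, sub_div]

lemma tendsto_div_of_bounded {w : ℕ → ℂ} {B : ℝ} (hB : ∀ n, ‖w n‖ ≤ B) :
    Tendsto (fun N : ℕ => w N / (N : ℂ)) atTop (𝓝 0) := by
  rw [tendsto_zero_iff_norm_tendsto_zero]
  refine squeeze_zero (fun _ => norm_nonneg _) (fun N => ?_)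
    (tendsto_const_div_atTop_nhds_zero_nat B)
  rw [norm_div, Complex.norm_natCast]
  gcongr
  exact hB N

lemma meanZero_shift_sub {w : ℕ → ℂ} {B : ℝ} (hB : ∀ n, ‖w n‖ ≤ B) (k : ℕ) :
    MeanZero (fun n => w (n + k) - w n) := by
  induction k with
  | zero => exact meanZero_of_tendsto (by simp)
  | succ k ih =>
    have h1 := meanZero_telescope (w := fun n => w (n + k))
      (tendsto_div_of_bounded (B := B) fun n => hB _)
    have := h1.add ih
    simp only [sub_add_sub_cancel] at this
    simpa only [add_right_comm _ 1 k, add_assoc, add_comm 1 k] using this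

lemma MeanZero.shift {w : ℕ → ℂ} {B : ℝ} (hB : ∀ n, ‖w n‖ ≤ B) (hw : MeanZero w) (k : ℕ) :
    MeanZero (fun n => w (n + k)) := by
  simpa using (meanZero_shift_sub hB k).add hw

/-! ### Van der Corput's difference theorem -/

open ComplexConjugate in
lemma meanZero_correlation {z : ℕ → ℂ} (hz : ∀ n, ‖z n‖ = 1)
    (hcor : ∀ r : ℕ, 1 ≤ r → MeanZero (fun n => z (n + r) * conj (z n))) (j k : ℕ) :
    MeanZero (fun n => z (n + j) * conj (z (n + k)) - if j = k then 1 else 0) := by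
  have key : ∀ r : ℕ, 1 ≤ r → ∀ k : ℕ, MeanZero (fun n => z (n + k + r) * conj (z (n + k))) := by
    intro r hr k
    refine (hcor r hr).shift (B := 1) (fun n => ?_) k
    rw [norm_mul, RCLike.norm_conj, hz, hz, mul_one]
  rcases lt_trichotomy j k with h | h | h
  · obtain ⟨r, rfl⟩ := Nat.exists_eq_add_of_lt h
    have h1 := key (r + 1) (by omega) j
    have h2 : MeanZero (fun n => conj (z (n + j + (r + 1)) * conj (z (n + j)))) := h1.conj
    have hne : j ≠ j + r + 1 := by omega
    simpa [hne, mul_comm, add_assoc] using h2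
  · subst h
    refine meanZero_of_tendsto ?_
    have : ∀ n, z (n + j) * conj (z (n + j)) - (if j = j then 1 else 0) = 0 := by
      intro n
      rw [Complex.mul_conj, Complex.normSq_eq_norm_sq, hz]; simp
    exact tendsto_const_nhds.congr fun n => (this n).symm
  · obtain ⟨r, rfl⟩ := Nat.exists_eq_add_of_lt h
    simpa [add_assoc] using key (r + 1) (by omega) k

open ComplexConjugate in
/-- **Van der Corput's difference theorem** for exponential sums. -/
theorem meanZero_of_correlations {z : ℕ → ℂ} (hz : ∀ n, ‖z n‖ = 1)
    (hcor : ∀ r : ℕ, 1 ≤ r → MeanZero (fun n => z (n + r) * conj (z n))) : MeanZero z := by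
  -- For a window length `H`, let `A n` be the sum of `z` over `[n, n + H)`. Its means are
  -- asymptotically `H` times those of `z`, while its mean square is asymptotically `H`.
  have bound : ∀ H : ℕ, 1 ≤ H → ∀ᶠ N : ℕ in atTop,
      (H : ℝ) * ‖(∑ n ∈ Finset.range N, z n) / (N : ℂ)‖ ≤ √(H + 1) + 1 := by
    intro H hH
    set A : ℕ → ℂ := fun n => ∑ j ∈ Finset.range H, z (n + j) with hA
    have h1 : MeanZero (fun n => A n - H * z n) := by
      have := MeanZero.sum (Finset.range H) (w := fun j n => z (n + j) - z n)
        (fun j _ => meanZero_shift_sub (B := 1) (fun n => (hz n).le) j)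
      simpa [hA, Finset.sum_sub_distrib] using this
    have h2 : MeanZero (fun n => ((‖A n‖ ^ 2 : ℝ) : ℂ) - H) := by
      have := MeanZero.sum (Finset.range H) (fun j _ =>
        MeanZero.sum (Finset.range H) (fun k _ => meanZero_correlation hz hcor j k))
      convert! this using 2 with n
      rw [← Complex.normSq_eq_norm_sq, ← Complex.mul_conj, hA]
      simp only [map_sum, Finset.sum_sub_distrib, Finset.sum_mul_sum, Finset.sum_ite_eq,
        Finset.sum_ite_mem, Finset.inter_self, Finset.sum_const, Finset.card_range]
      simp
    have e1 := (tendsto_zero_iff_norm_tendsto_zero.1 h1).eventually_lt_const one_pos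
    have e2 := (tendsto_zero_iff_norm_tendsto_zero.1 h2).eventually_lt_const one_pos
    filter_upwards [e1, e2, eventually_ge_atTop 1] with N e1 e2 hN
    have hN0 : (0 : ℝ) < N := by exact_mod_cast hN
    have hN0' : (N : ℂ) ≠ 0 := by exact_mod_cast hN0.ne'
    have q1 : (∑ n ∈ Finset.range N, ‖A n‖ ^ 2) / N ≤ H + 1 := by
      have hcast : (∑ n ∈ Finset.range N, (((‖A n‖ ^ 2 : ℝ) : ℂ) - H)) / (N : ℂ)
          = (((∑ n ∈ Finset.range N, ‖A n‖ ^ 2) / N - H : ℝ) : ℂ) := by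
        push_cast
        rw [Finset.sum_sub_distrib, Finset.sum_const, Finset.card_range, nsmul_eq_mul]
        field_simp
      rw [hcast, Complex.norm_real, Real.norm_eq_abs] at e2
      linarith [(abs_lt.1 e2).2]
    have q2 : ‖(∑ n ∈ Finset.range N, A n) / (N : ℂ)‖ ≤ √(H + 1) := by
      apply Real.le_sqrt_of_sq_le
      refine le_trans ?_ q1
      rw [norm_div, Complex.norm_natCast, div_pow, div_le_div_iff₀ (by positivity) hN0]
      have c1 : ‖∑ n ∈ Finset.range N, A n‖ ^ 2 ≤ (∑ n ∈ Finset.range N, ‖A n‖) ^ 2 := by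
        gcongr
        exact norm_sum_le _ _
      have c2 := sq_sum_le_card_mul_sum_sq (s := Finset.range N) (f := fun n => ‖A n‖)
      rw [Finset.card_range] at c2
      nlinarith [c1.trans c2]
    have q3 : (H : ℂ) * ((∑ n ∈ Finset.range N, z n) / (N : ℂ))
        = (∑ n ∈ Finset.range N, A n) / (N : ℂ)
          - (∑ n ∈ Finset.range N, (A n - H * z n)) / (N : ℂ) := by
      rw [Finset.sum_sub_distrib, ← Finset.mul_sum]
      ring
    calc (H : ℝ) * ‖(∑ n ∈ Finset.range N, z n) / (N : ℂ)‖
        = ‖(H : ℂ) * ((∑ n ∈ Finset.range N, z n) / (N : ℂ))‖ := by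
          rw [norm_mul, Complex.norm_natCast]
      _ ≤ _ := by
          rw [q3]
          exact (norm_sub_le _ _).trans (by linarith)
  unfold MeanZero
  rw [tendsto_zero_iff_norm_tendsto_zero]
  rw [Metric.tendsto_nhds]
  intro ε hε
  have hlim : Tendsto (fun H : ℕ => (√((H : ℝ) + 1) + 1) / (H : ℝ)) atTop (𝓝 0) := by
    have hs : Tendsto (fun H : ℕ => 3 / √(H : ℝ)) atTop (𝓝 0) :=
      (Real.tendsto_sqrt_atTop.comp tendsto_natCast_atTop_atTop).const_div_atTop 3
    refine squeeze_zero' (Eventually.of_forall fun H => by positivity) ?_ hs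
    filter_upwards [eventually_ge_atTop 1] with H hH
    have hH1 : (1 : ℝ) ≤ H := by exact_mod_cast hH
    have hs1 : 1 ≤ √(H : ℝ) := Real.one_le_sqrt.2 hH1
    have hs2 : √((H : ℝ) + 1) ≤ 2 * √(H : ℝ) := by
      rw [Real.sqrt_le_left (by positivity), mul_pow, Real.sq_sqrt (by positivity)]
      linarith
    rw [div_le_div_iff₀ (by positivity) (by positivity)]
    nlinarith [Real.mul_self_sqrt (show (0 : ℝ) ≤ H by positivity)]
  obtain ⟨H, hHε, hH1⟩ := ((hlim.eventually_lt_const hε).and (eventually_ge_atTop 1)).exists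
  filter_upwards [bound H hH1] with N hN
  have hH0 : (0 : ℝ) < H := by exact_mod_cast hH1
  rw [dist_zero_right, norm_norm]
  refine lt_of_le_of_lt ?_ hHε
  rw [le_div_iff₀ hH0]
  linarith

/-! ### Weyl's criterion -/

/-- The arc of the circle `ℝ / ℤ` over `[a, b)` has boundary contained in its two endpoints. -/
lemma frontier_arc_subset (a b : ℝ) :
    frontier ((fun t : ℝ => (t : UnitAddCircle)) '' Set.Ico a b) ⊆
      {(a : UnitAddCircle), (b : UnitAddCircle)} := by
  have hc : closure ((fun t : ℝ => (t : UnitAddCircle)) '' Set.Ico a b) ⊆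
      (fun t : ℝ => (t : UnitAddCircle)) '' Set.Icc a b :=
    closure_minimal (Set.image_mono Set.Ico_subset_Icc_self)
      (isCompact_Icc.image (AddCircle.continuous_mk' 1)).isClosed
  have ho : (fun t : ℝ => (t : UnitAddCircle)) '' Set.Ioo a b ⊆
      interior ((fun t : ℝ => (t : UnitAddCircle)) '' Set.Ico a b) :=
    interior_maximal (Set.image_mono Set.Ioo_subset_Ico_self)
      (QuotientAddGroup.isOpenMap_coe _ isOpen_Ioo)
  rintro y ⟨hy1, hy2⟩
  obtain ⟨t, ht, rfl⟩ := hc hy1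
  rcases eq_or_lt_of_le ht.1 with h | h
  · left; simp [h]
  rcases eq_or_lt_of_le ht.2 with h' | h'
  · right; simp [h']
  exact absurd (ho ⟨t, ⟨h, h'⟩, rfl⟩) hy2

lemma mem_arc_iff {a b : ℝ} (ha : 0 ≤ a) (hb : b ≤ 1) (t : ℝ) :
    (t : UnitAddCircle) ∈ (fun t : ℝ => (t : UnitAddCircle)) '' Set.Ico a b ↔
      Int.fract t ∈ Set.Ico a b := by
  constructor
  · rintro ⟨s, hs, hst⟩
    have h1 : s = Int.fract t := by
      rw [← AddCircle.coe_fract t] at hst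
      refine (AddCircle.coe_eq_coe_iff_of_mem_Ico (p := (1 : ℝ)) (a := 0) ?_ ?_).1 hst
      · exact ⟨ha.trans hs.1, by linarith [hs.2]⟩
      · exact ⟨Int.fract_nonneg t, by linarith [Int.fract_lt_one t]⟩
    exact h1 ▸ hs
  · intro h
    exact ⟨Int.fract t, h, AddCircle.coe_fract t⟩

open MeasureTheory

lemma measurableSet_arc (a b : ℝ) :
    MeasurableSet ((fun t : ℝ => (t : UnitAddCircle)) '' Set.Ico a b) := by
  rcases lt_or_ge a b with hab | hab
  · rw [← Set.Ioo_union_left hab, Set.image_union, Set.image_singleton]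
    exact (QuotientAddGroup.isOpenMap_coe _ isOpen_Ioo).measurableSet.union
      (measurableSet_singleton _)
  · simp [Set.Ico_eq_empty_of_le hab]

lemma volume_arc {a b : ℝ} (ha : 0 ≤ a) (hb : b ≤ 1) :
    volume ((fun t : ℝ => (t : UnitAddCircle)) '' Set.Ico a b) = ENNReal.ofReal (b - a) := by
  have hm := measurableSet_arc a b
  rw [← (UnitAddCircle.measurePreserving_mk 0).measure_preimage hm.nullMeasurableSet,
    zero_add, ← Measure.restrict_congr_set Ico_ae_eq_Ioc,
    Measure.restrict_apply (AddCircle.measurable_mk' hm), ← Real.volume_Ico]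
  congr 1
  ext t
  simp only [Set.mem_inter_iff, Set.mem_preimage]
  constructor
  · rintro ⟨h1, h2⟩
    have := (mem_arc_iff ha hb t).1 h1
    rwa [Int.fract_eq_self.2 ⟨h2.1, h2.2⟩] at this
  · intro h
    exact ⟨⟨t, h, rfl⟩, ha.trans h.1, h.2.trans_le hb⟩

lemma volume_singleton_circle (y : UnitAddCircle) : volume ({y} : Set UnitAddCircle) = 0 := by
  have := AddCircle.volume_closedBall 1 (x := y) 0
  simpa using this

instance isProbabilityMeasure_circle : IsProbabilityMeasure (volume : Measure UnitAddCircle) :=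
  ⟨UnitAddCircle.measure_univ⟩

/-- The empirical measure of the first `N + 1` terms of a sequence on the circle. -/
noncomputable def empirical (y : ℕ → UnitAddCircle) (N : ℕ) : Measure UnitAddCircle :=
  ((N + 1 : ℕ) : ENNReal)⁻¹ • ∑ n ∈ Finset.range (N + 1), Measure.dirac (y n)

instance isProbabilityMeasure_empirical (y : ℕ → UnitAddCircle) (N : ℕ) :
    IsProbabilityMeasure (empirical y N) := by
  constructor
  simp only [empirical, Measure.smul_apply, Measure.coe_finsetSum, Finset.sum_apply,
    measure_univ, Finset.sum_const, Finset.card_range, smul_eq_mul, nsmul_eq_mul, mul_one]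
  exact ENNReal.inv_mul_cancel (by simp) (ENNReal.natCast_ne_top _)

lemma integral_empirical (y : ℕ → UnitAddCircle) (N : ℕ) (f : C(UnitAddCircle, ℂ)) :
    ∫ t, f t ∂(empirical y N)
      = (∑ n ∈ Finset.range (N + 1), f (y n)) / ((N + 1 : ℕ) : ℂ) := by
  rw [empirical, integral_smul_measure, integral_finsetSum_measure, ENNReal.toReal_inv,
    ENNReal.toReal_natCast]
  · simp [div_eq_inv_mul]
  · intro i _
    exact integrable_dirac (by simp)

open scoped Classical in
lemma empirical_apply (y : ℕ → UnitAddCircle) (N : ℕ) {S : Set UnitAddCircle}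
    (hS : MeasurableSet S) :
    ((empirical y N) S).toReal
      = (((Finset.range (N + 1)).filter (fun n => y n ∈ S)).card : ℝ) / ((N + 1 : ℕ) : ℝ) := by
  simp only [empirical, Measure.smul_apply, Measure.coe_finsetSum, Finset.sum_apply,
    Measure.dirac_apply' _ hS, smul_eq_mul, Set.indicator_apply, Pi.one_apply,
    Finset.sum_boole, ENNReal.toReal_mul, ENNReal.toReal_inv, ENNReal.toReal_natCast]
  rw [div_eq_inv_mul]

/-- If the nontrivial characters average to `0` along `y`, the empirical measures integrate every
continuous function in the limit as Lebesgue measure does: this holds for characters, and the set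
of functions for which it holds is a closed subspace. -/
lemma tendsto_integral_empirical {y : ℕ → UnitAddCircle}
    (hy : ∀ m : ℤ, m ≠ 0 → MeanZero (fun n => fourier m (y n))) (f : C(UnitAddCircle, ℂ)) :
    Tendsto (fun N => ∫ t, f t ∂(empirical y N)) atTop (𝓝 (∫ t, f t)) := by
  have hIntegrable : ∀ (μ : Measure UnitAddCircle) [IsProbabilityMeasure μ] (g : C(UnitAddCircle, ℂ)),
      Integrable g μ := fun μ _ g =>
    (BoundedContinuousFunction.mkOfCompact g).integrable μ
  have hspan : ∀ g ∈ Submodule.span ℂ (Set.range (@fourier 1)),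
      Tendsto (fun N => ∫ t, g t ∂(empirical y N)) atTop (𝓝 (∫ t, g t)) := by
    intro g hg
    induction hg using Submodule.span_induction with
    | mem g hg =>
      obtain ⟨m, rfl⟩ := hg
      rcases eq_or_ne m 0 with rfl | hm
      · simp
      · have h0 : ∫ t, (fourier m : C(UnitAddCircle, ℂ)) t = 0 :=
          integral_eq_zero_of_add_right_eq_neg (fourier_add_half_inv_index hm one_pos)
        rw [h0]
        simp only [integral_empirical]
        exact (tendsto_add_atTop_iff_nat 1).2 (hy m hm)
    | zero => simp
    | add g₁ g₂ _ _ h₁ h₂ =>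
      simp only [ContinuousMap.add_apply]
      rw [integral_add (hIntegrable _ _) (hIntegrable _ _)]
      refine (h₁.add h₂).congr fun N => ?_
      rw [integral_add (hIntegrable _ _) (hIntegrable _ _)]
    | smul a g _ h =>
      simp only [ContinuousMap.smul_apply, integral_smul]
      exact h.const_smul a
  have hdist : ∀ (μ : Measure UnitAddCircle) [IsProbabilityMeasure μ] (g : C(UnitAddCircle, ℂ)),
      dist (∫ t, f t ∂μ) (∫ t, g t ∂μ) ≤ dist f g := by
    intro μ _ g
    rw [dist_eq_norm, ← integral_sub (hIntegrable _ _) (hIntegrable _ _)]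
    have := norm_integral_le_of_norm_le_const (μ := μ) (f := fun t => f t - g t) (C := dist f g)
      (Eventually.of_forall fun t => by
        rw [← dist_eq_norm]; exact ContinuousMap.dist_apply_le_dist t)
    simpa using this
  have hf : f ∈ closure (Submodule.span ℂ (Set.range (@fourier 1)) : Set C(UnitAddCircle, ℂ)) := by
    rw [← Submodule.topologicalClosure_coe, span_fourier_closure_eq_top]
    trivial
  rw [Metric.tendsto_nhds]
  intro ε hε
  obtain ⟨g, hg, hfg⟩ := Metric.mem_closure_iff.1 hf (ε / 3) (by positivity)
  filter_upwards [Metric.tendsto_nhds.1 (hspan g hg) (ε / 3) (by positivity)] with N hN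
  have h1 := hdist (empirical y N) g
  have h2 := hdist volume g
  have h3 := dist_triangle4 (∫ t, f t ∂(empirical y N)) (∫ t, g t ∂(empirical y N))
    (∫ t, g t) (∫ t, f t)
  rw [dist_comm (∫ t, g t)] at h3
  linarith

/-- **Weyl's criterion**, the sufficiency direction. -/
theorem unifDistMod1_of_meanZero {x : ℕ → ℝ}
    (hx : ∀ m : ℤ, m ≠ 0 →
      MeanZero (fun n => Complex.exp (Complex.I * ((2 * Real.pi * m * x n : ℝ) : ℂ)))) :
    UnifDistMod1 x := by
  classical
  intro a b ha _ hb
  set y : ℕ → UnitAddCircle := fun n => (x (n + 1) : UnitAddCircle) with hy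
  have hmean : ∀ m : ℤ, m ≠ 0 → MeanZero (fun n => fourier m (y n)) := by
    intro m hm
    have := (hx m hm).shift (B := 1) (fun n => (Complex.norm_exp_I_mul_ofReal _).le) 1
    convert! this using 2 with n
    rw [hy, fourier_coe_apply]
    congr 1
    push_cast
    ring
  set P : ℕ → ProbabilityMeasure UnitAddCircle := fun N => ⟨empirical y N, inferInstance⟩ with hP
  set V : ProbabilityMeasure UnitAddCircle := ⟨volume, inferInstance⟩ with hV
  have hlim : Tendsto P atTop (𝓝 V) := by
    rw [ProbabilityMeasure.tendsto_iff_forall_integral_rclike_tendsto ℂ]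
    intro f
    exact tendsto_integral_empirical hmean f.toContinuousMap
  set S := (fun t : ℝ => (t : UnitAddCircle)) '' Set.Ico a b with hS
  have hfr : (V : Measure UnitAddCircle) (frontier S) = 0 := by
    refine measure_mono_null (frontier_arc_subset a b) ?_
    rw [Set.insert_eq]
    exact measure_union_null (volume_singleton_circle _) (volume_singleton_circle _)
  have h1 := ProbabilityMeasure.tendsto_measure_of_null_frontier_of_tendsto' hlim hfr
  have h2 : Tendsto (fun N => ((empirical y N) S).toReal) atTop
      (𝓝 ((volume S).toReal)) :=
    (ENNReal.tendsto_toReal (measure_ne_top volume S)).comp h1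
  rw [volume_arc ha hb, ENNReal.toReal_ofReal (by linarith)] at h2
  refine (tendsto_add_atTop_iff_nat 1).1 (h2.congr fun N => ?_)
  rw [empirical_apply y N (measurableSet_arc a b)]
  congr 2
  -- The sequence is indexed from `1` while the empirical measure is indexed from `0`.
  rw [← Finset.card_map (addRightEmbedding 1)]
  congr 1
  ext k
  simp only [Finset.mem_map, Finset.mem_filter, Finset.mem_range, Finset.mem_Icc,
    addRightEmbedding_apply, hy, mem_arc_iff ha hb]
  constructor
  · rintro ⟨n, ⟨h1, h2⟩, rfl⟩
    exact ⟨by omega, h2⟩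
  · rintro ⟨⟨h1, h2⟩, h3⟩
    exact ⟨k - 1, ⟨by omega, by rwa [Nat.sub_add_cancel h1]⟩, by omega⟩

/-! ### Slowly varying phases -/

/-- The conditions on the pair of leading derivatives (of `c`, and of `log b`): `φ` is eventually
monotone with limit `0` and `x * |φ x| → ∞`, while `γ = o(φ)`. -/
structure IsGoodPair (φ γ : ℝ → ℝ) : Prop where
  zero : Tendsto φ atTop (𝓝 0)
  mono : ∃ x₁ : ℝ, MonotoneOn φ (Set.Ici x₁) ∨ AntitoneOn φ (Set.Ici x₁)
  inf : Tendsto (fun x => x * |φ x|) atTop atTop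
  ratio : Tendsto (fun x => γ x / φ x) atTop (𝓝 0)

lemma IsGoodPair.eventually_ne {φ γ : ℝ → ℝ} (H : IsGoodPair φ γ) : ∀ᶠ x in atTop, φ x ≠ 0 := by
  filter_upwards [H.inf.eventually_gt_atTop 0] with x hx h0
  simp [h0] at hx

lemma IsGoodPair.smul {φ γ : ℝ → ℝ} (H : IsGoodPair φ γ) {l : ℝ} (hl : l ≠ 0) :
    IsGoodPair (fun x => l * φ x) (fun x => l * γ x) where
  zero := by simpa using H.zero.const_mul l
  mono := by
    obtain ⟨x₁, h⟩ := H.mono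
    refine ⟨x₁, ?_⟩
    rcases hl.lt_or_gt with hneg | hpos
    · exact h.symm.imp (fun h x hx y hy hxy => mul_le_mul_of_nonpos_left (h hx hy hxy) hneg.le)
        (fun h x hx y hy hxy => mul_le_mul_of_nonpos_left (h hx hy hxy) hneg.le)
    · exact h.imp (fun h x hx y hy hxy => mul_le_mul_of_nonneg_left (h hx hy hxy) hpos.le)
        (fun h x hx y hy hxy => mul_le_mul_of_nonneg_left (h hx hy hxy) hpos.le)
  inf := by
    refine (H.inf.const_mul_atTop (abs_pos.2 hl)).congr fun x => ?_
    rw [abs_mul]; ring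
  ratio := H.ratio.congr fun x => (mul_div_mul_left _ _ hl).symm

/-- Goodness passes from derivatives to finite differences; limits and ratios transfer by
Lagrange's and Cauchy's mean value theorems. -/
lemma IsGoodPair.diff {C C' G G' : ℝ → ℝ} {x₀ : ℝ}
    (hC : ∀ x ≥ x₀, HasDerivAt C (C' x) x) (hG : ∀ x ≥ x₀, HasDerivAt G (G' x) x)
    (H : IsGoodPair C' G') {r : ℝ} (hr : 1 ≤ r) :
    IsGoodPair (fun x => C (x + r) - C x) (fun x => G (x + r) - G x) := by
  have hr0 : 0 < r := by linarith
  have hmvt : ∀ x : ℝ, ∃ ξ, x ≤ ξ ∧ ξ ≤ x + r ∧ (x₀ ≤ x → C (x + r) - C x = r * C' ξ) := by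
    intro x
    by_cases hx : x₀ ≤ x
    · obtain ⟨ξ, hξ, h⟩ := exists_hasDerivAt_eq_slope C C' (show x < x + r by linarith)
        (fun t ht => (hC t (hx.trans ht.1)).continuousAt.continuousWithinAt)
        (fun t ht => hC t (hx.trans ht.1.le))
      refine ⟨ξ, hξ.1.le, hξ.2.le, fun _ => ?_⟩
      rw [h, add_sub_cancel_left, mul_div_cancel₀ _ hr0.ne']
    · exact ⟨x, le_rfl, by linarith, fun h => absurd h hx⟩
  have hcauchy : ∀ x : ℝ, ∃ ξ, x ≤ ξ ∧
      (x₀ ≤ x → (C (x + r) - C x) * G' ξ = (G (x + r) - G x) * C' ξ) := by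
    intro x
    by_cases hx : x₀ ≤ x
    · obtain ⟨ξ, hξ, h⟩ := exists_ratio_hasDerivAt_eq_ratio_slope G G'
        (show x < x + r by linarith)
        (fun t ht => (hG t (hx.trans ht.1)).continuousAt.continuousWithinAt)
        (fun t ht => hG t (hx.trans ht.1.le)) C C'
        (fun t ht => (hC t (hx.trans ht.1)).continuousAt.continuousWithinAt)
        (fun t ht => hC t (hx.trans ht.1.le))
      exact ⟨ξ, hξ.1.le, fun _ => h⟩
    · exact ⟨x, le_rfl, fun h => absurd h hx⟩
  choose ξ hξ1 hξ2 hξ using hmvt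
  choose η hη1 hη using hcauchy
  have tξ : Tendsto ξ atTop atTop := tendsto_atTop_mono hξ1 tendsto_id
  have tη : Tendsto η atTop atTop := tendsto_atTop_mono hη1 tendsto_id
  have inf : Tendsto (fun x => x * |C (x + r) - C x|) atTop atTop := by
    have := (H.inf.comp tξ).const_mul_atTop (show (0 : ℝ) < 1 / 2 by norm_num)
    refine tendsto_atTop_mono' _ ?_ this
    filter_upwards [eventually_ge_atTop x₀, eventually_ge_atTop r] with x hx hxr
    rw [hξ x hx, abs_mul, abs_of_pos hr0]
    have := abs_nonneg (C' (ξ x))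
    have h2 := hξ2 x
    simp only [Function.comp]
    calc 1 / 2 * (ξ x * |C' (ξ x)|) = (1 / 2 * ξ x) * |C' (ξ x)| := by ring
      _ ≤ (x * r) * |C' (ξ x)| := mul_le_mul_of_nonneg_right (by nlinarith) this
      _ = _ := by ring
  refine ⟨?_, ?_, inf, ?_⟩
  · have := (H.zero.comp tξ).const_mul r
    rw [mul_zero] at this
    refine this.congr' ?_
    filter_upwards [eventually_ge_atTop x₀] with x hx
    rw [hξ x hx]; rfl
  · obtain ⟨x₁, h⟩ := H.mono
    set X := max x₀ x₁
    have hd : ∀ x ∈ Set.Ici X, HasDerivAt (fun x => C (x + r) - C x) (C' (x + r) - C' x) x := by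
      intro x hx
      have hx0 : x₀ ≤ x := (le_max_left _ _).trans hx
      exact ((hC (x + r) (by linarith)).comp_add_const x r).sub (hC x hx0)
    have hcont : ContinuousOn (fun x => C (x + r) - C x) (Set.Ici X) :=
      fun x hx => (hd x hx).continuousAt.continuousWithinAt
    have hdiff : DifferentiableOn ℝ (fun x => C (x + r) - C x) (interior (Set.Ici X)) :=
      fun x hx => (hd x (interior_subset hx)).differentiableAt.differentiableWithinAt
    refine ⟨X, h.imp (fun h => ?_) (fun h => ?_)⟩
    · refine monotoneOn_of_deriv_nonneg (convex_Ici X) hcont hdiff fun x hx => ?_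
      have hx' := interior_subset hx
      have hx1 : x₁ ≤ x := (le_max_right _ _).trans hx'
      rw [(hd x hx').deriv, sub_nonneg]
      exact h hx1 (show x₁ ≤ x + r by linarith) (by linarith)
    · refine antitoneOn_of_deriv_nonpos (convex_Ici X) hcont hdiff fun x hx => ?_
      have hx' := interior_subset hx
      have hx1 : x₁ ≤ x := (le_max_right _ _).trans hx'
      rw [(hd x hx').deriv, sub_nonpos]
      exact h hx1 (show x₁ ≤ x + r by linarith) (by linarith)
  · refine (H.ratio.comp tη).congr' ?_
    filter_upwards [eventually_ge_atTop x₀, tη.eventually H.eventually_ne,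
      inf.eventually_gt_atTop 0] with x hx h1 h2
    have h3 : C (x + r) - C x ≠ 0 := fun h0 => by simp [h0] at h2
    simp only [Function.comp]
    rw [div_eq_div_iff h1 h3]
    linarith [hη x hx]

/-- If `a` is eventually monotone and `a N = o(N)`, then `a n * (z (n + 1) - z n)` has mean zero for
bounded `z`: by partial summation it is controlled by the variation of `a`, which telescopes. -/
lemma meanZero_mul_diff {a : ℕ → ℝ} {z : ℕ → ℂ} (hz : ∀ n, ‖z n‖ = 1)
    (ha : Tendsto (fun N : ℕ => a N / N) atTop (𝓝 0)) {s : ℝ} (hs : |s| = 1)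
    (hmono : ∀ᶠ n in atTop, 0 ≤ s * (a (n + 1) - a n)) :
    MeanZero (fun n => (a n : ℂ) * (z (n + 1) - z n)) := by
  have haC : Tendsto (fun N : ℕ => (a N : ℂ) / (N : ℂ)) atTop (𝓝 0) := by
    have := (Complex.continuous_ofReal.tendsto 0).comp ha
    simpa [Function.comp_def] using this
  have h1 : MeanZero (fun n => (a (n + 1) : ℂ) * z (n + 1) - a n * z n) := by
    refine meanZero_telescope (w := fun n => (a n : ℂ) * z n) ?_
    rw [tendsto_zero_iff_norm_tendsto_zero] at haC ⊢
    refine haC.congr fun N => ?_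
    rw [norm_div, norm_div, norm_mul, hz, mul_one]
  have h2 : MeanZero (fun n => ((|a (n + 1) - a n| : ℝ) : ℂ)) := by
    have t1 : MeanZero (fun n => (s : ℂ) * ((a (n + 1) : ℂ) - a n)) :=
      (meanZero_telescope (w := fun n => (a n : ℂ)) haC).const_mul _
    have t2 : MeanZero (fun n => ((|a (n + 1) - a n| : ℝ) : ℂ)
        - (s : ℂ) * ((a (n + 1) : ℂ) - a n)) := by
      refine meanZero_of_tendsto (tendsto_const_nhds.congr' ?_)
      filter_upwards [hmono] with n hn
      have : |a (n + 1) - a n| = s * (a (n + 1) - a n) := by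
        rw [← abs_of_nonneg hn, abs_mul, hs, one_mul]
      rw [this]
      push_cast
      ring
    simpa using t2.add t1
  have h3 : MeanZero (fun n => ((a (n + 1) : ℂ) - a n) * z (n + 1)) := by
    refine meanZero_of_norm_le (fun n => ?_) h2
    rw [norm_mul, hz, mul_one, ← Complex.ofReal_sub, Complex.norm_real, Real.norm_eq_abs]
  have := h1.sub h3
  convert! this using 2 with n
  ring

/-- The first-order case: a phase whose increments `d n + e n` satisfy the discrete analogue of
`IsGoodPair`. Here `z n` differs from `(z (n + 1) - z n) / (I * d n)` by `o(1)`. -/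
lemma meanZero_exp_of_increments {u d e : ℕ → ℝ} (hu : ∀ n, u (n + 1) - u n = d n + e n)
    (hd : Tendsto d atTop (𝓝 0)) (hd0 : ∀ᶠ n in atTop, d n ≠ 0)
    (hmono : (∀ᶠ n in atTop, d n ≤ d (n + 1)) ∨ (∀ᶠ n in atTop, d (n + 1) ≤ d n))
    (hinf : Tendsto (fun n : ℕ => (n : ℝ) * |d n|) atTop atTop)
    (hratio : Tendsto (fun n => e n / d n) atTop (𝓝 0)) :
    MeanZero (fun n => Complex.exp (Complex.I * (u n : ℂ))) := by
  set z : ℕ → ℂ := fun n => Complex.exp (Complex.I * (u n : ℂ)) with hz_def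
  have hz : ∀ n, ‖z n‖ = 1 := fun n => Complex.norm_exp_I_mul_ofReal _
  have ha : Tendsto (fun N : ℕ => (d N)⁻¹ / N) atTop (𝓝 0) := by
    rw [tendsto_zero_iff_norm_tendsto_zero]
    refine hinf.inv_tendsto_atTop.congr fun n => ?_
    simp [div_eq_mul_inv]
  obtain ⟨s, hs, hsm⟩ : ∃ s : ℝ, |s| = 1 ∧
      ∀ᶠ n in atTop, 0 ≤ s * ((d (n + 1))⁻¹ - (d n)⁻¹) := by
    have hd0' := (tendsto_add_atTop_nat 1).eventually hd0
    rcases hmono with hm | hm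
    · refine ⟨-1, by simp, ?_⟩
      obtain ⟨M, hM⟩ := eventually_atTop.1 hm
      filter_upwards [eventually_ge_atTop M, hd0, hd0'] with n hn h0 h1
      have hle : ∀ k ≥ M, d k ≤ 0 := fun k hk =>
        ge_of_tendsto hd ((eventually_ge_atTop k).mono fun j hj =>
          Nat.le_induction le_rfl (fun i hi ih => ih.trans (hM i (hk.trans hi))) j hj)
      have h0' := lt_of_le_of_ne (hle n hn) h0
      have h1' := lt_of_le_of_ne (hle (n + 1) (by omega)) h1
      have := (inv_le_inv_of_neg h1' h0').2 (hM n hn)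
      linarith
    · refine ⟨1, by simp, ?_⟩
      obtain ⟨M, hM⟩ := eventually_atTop.1 hm
      filter_upwards [eventually_ge_atTop M, hd0, hd0'] with n hn h0 h1
      have hle : ∀ k ≥ M, 0 ≤ d k := fun k hk =>
        le_of_tendsto hd ((eventually_ge_atTop k).mono fun j hj =>
          Nat.le_induction le_rfl (fun i hi ih => (hM i (hk.trans hi)).trans ih) j hj)
      have h0' := lt_of_le_of_ne (hle n hn) h0.symm
      have h1' := lt_of_le_of_ne (hle (n + 1) (by omega)) h1.symm
      have := (inv_le_inv₀ h0' h1').2 (hM n hn)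
      linarith
  have h1 := (meanZero_mul_diff hz ha hs hsm).const_mul (-Complex.I)
  have h2 : MeanZero (fun n => z n - -Complex.I * (((d n)⁻¹ : ℝ) * (z (n + 1) - z n))) := by
    apply meanZero_of_tendsto
    -- The error is at most `|δ|² / |d| + |e / d|`, where `δ = d + e` is the increment.
    have hδ : Tendsto (fun n => |d n| * (1 + e n / d n) ^ 2 + |e n / d n|) atTop (𝓝 0) := by
      have := (hd.abs.mul ((hratio.const_add 1).pow 2)).add hratio.abs
      simpa using this
    have hδ0 : Tendsto (fun n => d n * (1 + e n / d n)) atTop (𝓝 0) := by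
      simpa using hd.mul (hratio.const_add 1)
    refine squeeze_zero_norm' ?_ hδ
    filter_upwards [hd0, (tendsto_zero_iff_norm_tendsto_zero.1 hδ0).eventually_le_const one_pos]
      with n h0 hle
    have hδe : d n * (1 + e n / d n) = d n + e n := by field_simp
    set δ := d n + e n with hδ_def
    have hC0 : (d n : ℂ) ≠ 0 := by exact_mod_cast h0
    have hexp := Complex.norm_exp_sub_one_sub_id_le (x := Complex.I * (δ : ℂ))
      (by rw [norm_mul, Complex.norm_I, one_mul, Complex.norm_real, ← hδe]; exact hle)
    have hzn : z (n + 1) = z n * Complex.exp (Complex.I * (δ : ℂ)) := by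
      rw [hz_def]
      simp only
      rw [← Complex.exp_add, ← mul_add, ← Complex.ofReal_add, hδ_def, ← hu n]
      congr 3
      ring
    have hid : z n - -Complex.I * (((d n)⁻¹ : ℝ) * (z (n + 1) - z n))
        = z n * (Complex.I / d n * (Complex.exp (Complex.I * (δ : ℂ)) - 1 - Complex.I * (δ : ℂ))
          - ((e n / d n : ℝ) : ℂ)) := by
      rw [hzn, hδ_def]
      push_cast
      field_simp
      ring_nf
      rw [Complex.I_sq]
      ring
    rw [hid, norm_mul, hz, one_mul]
    refine (norm_sub_le _ _).trans ?_
    rw [Complex.norm_real, Real.norm_eq_abs, norm_mul, norm_div, Complex.norm_I,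
      Complex.norm_real, Real.norm_eq_abs]
    refine add_le_add ?_ le_rfl
    calc 1 / |d n| * ‖Complex.exp (Complex.I * (δ : ℂ)) - 1 - Complex.I * (δ : ℂ)‖
        ≤ 1 / |d n| * ‖Complex.I * (δ : ℂ)‖ ^ 2 := by gcongr
      _ = |d n| * (1 + e n / d n) ^ 2 := by
        rw [norm_mul, Complex.norm_I, one_mul, Complex.norm_real, Real.norm_eq_abs, sq_abs,
          ← hδe, mul_pow, ← sq_abs (d n)]
        field_simp
  simpa using h2.add h1

/-- Induction on the order: van der Corput's theorem replaces a phase by its differences, for which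
the leading derivatives again form a good pair, of order one less. `C i` and `G i` stand for the
`i`-th derivatives of the two summands of the phase. -/
theorem meanZero_exp_of_isGoodPair (h : ℕ) : ∀ (C G : ℕ → ℝ → ℝ) (x₀ : ℝ),
    (∀ i ≤ h, ∀ x ≥ x₀, HasDerivAt (C i) (C (i + 1) x) x) →
    (∀ i ≤ h, ∀ x ≥ x₀, HasDerivAt (G i) (G (i + 1) x) x) →
    IsGoodPair (C (h + 1)) (G (h + 1)) →
    MeanZero (fun n : ℕ => Complex.exp (Complex.I * ((C 0 n + G 0 n : ℝ) : ℂ))) := by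
  induction h with
  | zero =>
    intro C G x₀ hC hG H
    have D := IsGoodPair.diff (hC 0 le_rfl) (hG 0 le_rfl) H le_rfl
    have tN := tendsto_natCast_atTop_atTop (R := ℝ)
    refine meanZero_exp_of_increments (d := fun n => C 0 (n + 1) - C 0 n)
      (e := fun n => G 0 (n + 1) - G 0 n) (fun n => ?_) (D.zero.comp tN)
      (tN.eventually D.eventually_ne) ?_ (D.inf.comp tN) (D.ratio.comp tN)
    · push_cast
      ring
    · obtain ⟨x₁, hm⟩ := D.mono
      refine hm.imp (fun hm => ?_) (fun hm => ?_)
      all_goals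
        filter_upwards [tN.eventually (eventually_ge_atTop x₁)] with n hn
        have := hm (show x₁ ≤ (n : ℝ) from hn) (show x₁ ≤ (n : ℝ) + 1 by linarith) (by linarith)
        push_cast
        exact this
  | succ h ih =>
    intro C G x₀ hC hG H
    refine meanZero_of_correlations (fun n => Complex.norm_exp_I_mul_ofReal _) fun r hr => ?_
    have hr1 : (1 : ℝ) ≤ r := by exact_mod_cast hr
    have D := IsGoodPair.diff (hC (h + 1) le_rfl) (hG (h + 1) le_rfl) H hr1
    have shift : ∀ F : ℕ → ℝ → ℝ, (∀ i ≤ h + 1, ∀ x ≥ x₀, HasDerivAt (F i) (F (i + 1) x) x) →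
        ∀ i ≤ h, ∀ x ≥ x₀, HasDerivAt (fun x => F i (x + r) - F i x)
          (F (i + 1) (x + r) - F (i + 1) x) x := fun F hF i hi x hx =>
      ((hF i (by omega) (x + r) (by linarith)).comp_add_const x r).sub (hF i (by omega) x hx)
    have := ih (fun i x => C i (x + r) - C i x) (fun i x => G i (x + r) - G i x) x₀
      (shift C hC) (shift G hG) D
    convert! this using 2 with n
    rw [← Complex.exp_conj, ← Complex.exp_add]
    congr 1
    simp only [map_mul, Complex.conj_I, Complex.conj_ofReal]
    push_cast
    ring

/-- Under the "good" hypotheses on `b` and `c`, for every nonzero real `λ` the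
sequence `n ↦ λ·(log b(n) + c(n))` is uniformly distributed mod 1; in particular
this holds for `λ = 1/log k` for every integer base `k ≥ 2`. -/
theorem unifDistMod1_scaled_log_add (b c : ℝ → ℝ) (hb : ∀ x : ℝ, 0 < b x)
    (h : ℕ) (hh : 1 ≤ h) (x₀ : ℝ)
    -- (1)
    (hcdiff : ∀ i < h, ∀ x ≥ x₀, DifferentiableAt ℝ (iteratedDeriv i c) x)
    (hczero : Tendsto (iteratedDeriv h c) atTop (𝓝 0))
    (hcmono : ∃ x₁ : ℝ, MonotoneOn (iteratedDeriv h c) (Set.Ici x₁) ∨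
      AntitoneOn (iteratedDeriv h c) (Set.Ici x₁))
    -- (2)
    (hcinf : Tendsto (fun x : ℝ => x * |iteratedDeriv h c x|) atTop atTop)
    -- (3)
    (hbdiff : ∀ i < h, ∀ x ≥ x₀,
      DifferentiableAt ℝ (iteratedDeriv i (fun x => Real.log (b x))) x)
    (hratio : Tendsto
      (fun x : ℝ => iteratedDeriv h (fun x => Real.log (b x)) x / iteratedDeriv h c x)
      atTop (𝓝 0)) :
    (∀ l : ℝ, l ≠ 0 →
        UnifDistMod1 (fun n => l * (Real.log (b n) + c n))) ∧
      ∀ k : ℕ, 2 ≤ k →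
        UnifDistMod1 (fun n => (Real.log (b n) + c n) / Real.log k) := by
  have main : ∀ l : ℝ, l ≠ 0 → UnifDistMod1 (fun n => l * (Real.log (b n) + c n)) := by
    intro l hl
    refine unifDistMod1_of_meanZero fun m hm => ?_
    set L : ℝ := 2 * Real.pi * m * l
    have hL : L ≠ 0 :=
      mul_ne_zero (mul_ne_zero Real.two_pi_pos.ne' (Int.cast_ne_zero.2 hm)) hl
    obtain ⟨k, rfl⟩ := Nat.exists_eq_add_of_le' hh
    have H : IsGoodPair (iteratedDeriv (k + 1) c)
        (iteratedDeriv (k + 1) (fun x => Real.log (b x))) := ⟨hczero, hcmono, hcinf, hratio⟩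
    have hder : ∀ f : ℝ → ℝ,
        (∀ i < k + 1, ∀ x ≥ x₀, DifferentiableAt ℝ (iteratedDeriv i f) x) →
        ∀ i ≤ k, ∀ x ≥ x₀, HasDerivAt (fun x => L * iteratedDeriv i f x)
          (L * iteratedDeriv (i + 1) f x) x := by
      intro f hf i hi x hx
      rw [iteratedDeriv_succ]
      exact (hf i (by omega) x hx).hasDerivAt.const_mul L
    have := meanZero_exp_of_isGoodPair k (fun i x => L * iteratedDeriv i c x)
      (fun i x => L * iteratedDeriv i (fun x => Real.log (b x)) x) x₀
      (hder c hcdiff) (hder _ hbdiff) (H.smul hL)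
    convert! this using 5 with n
    simp only [iteratedDeriv_zero, L]
    ring
  refine ⟨main, fun k hk => ?_⟩
  have hlog : Real.log k ≠ 0 := (Real.log_pos (by exact_mod_cast hk)).ne'
  simpa only [div_eq_inv_mul] using main (Real.log k)⁻¹ (inv_ne_zero hlog)
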